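/- Let ℋ = ⊗_{x=1}^m 𝒬_x be a tensor product of m finite-dimensional complex Hilbert spaces (qudits), and let H = ∑_{1≤i₁<⋯<i_k≤m} H_{i₁⋯i_k} be a k-local Hamiltonian, where each term H_{i₁⋯i_k} acts as the identity on all qudits outside {i₁,…,i_k} and has vanishing partial trace over each of the qudits i₁,…,i_k. Then for every nonzero operator O on ℋ with operator norm ‖O‖_∞ ≤ 1 and every real p ≥ 2, ‖HO‖_p̄ ≤ e · p^{k/2} · ‖H‖_(2) · ‖O‖_p̄ · (|ln ‖O‖_p̄| + 1)^{k/2}, where ‖H‖_(2) := √(∑_{1≤i₁<⋯<i_k≤m} ‖H_{i₁⋯i_k}‖_∞²). -/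

import Mathlib

open scoped Kronecker Matrix

/-- The operator norm (largest singular value) of a complex matrix. -/
noncomputable def opNorm {n : Type*} [Fintype n] [DecidableEq n] (A : Matrix n n ℂ) : ℝ :=
  ‖Matrix.toEuclideanCLM (𝕜 := ℂ) A‖

/-- The Schatten `p`-norm `‖A‖_p = (Tr((AᴴA)^{p/2}))^{1/p}`, expressed through the
eigenvalues of `AᴴA` (the squared singular values of `A`). -/
noncomputable def schattenNorm {n : Type*} [Fintype n] [DecidableEq n] (p : ℝ)
    (A : Matrix n n ℂ) : ℝ :=
  (∑ i, ((Matrix.isHermitian_conjTranspose_mul_self A).eigenvalues i) ^ (p / 2)) ^ (1 / p)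

/-- The normalized Schatten `p`-norm `‖A‖_p̄ := ‖A‖_p / ‖I‖_p`. -/
noncomputable def nschattenNorm {n : Type*} [Fintype n] [DecidableEq n] (p : ℝ)
    (A : Matrix n n ℂ) : ℝ :=
  schattenNorm p A / schattenNorm p (1 : Matrix n n ℂ)

/-- An operator on the qudits `Q x`, `x : Fin m`, is supported on the set `S` if (after
reindexing along the tensor factorization of the configuration space) it has the form
`B ⊗ 1`, i.e. it acts as the identity on all qudits outside `S`. -/
def SupportedOn {m : ℕ} (Q : Fin m → Type*) [∀ x, Fintype (Q x)] [∀ x, DecidableEq (Q x)]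
    (S : Finset (Fin m)) (A : Matrix (∀ x, Q x) (∀ x, Q x) ℂ) : Prop :=
  ∃ B : Matrix (∀ x : {y : Fin m // y ∈ S}, Q x) (∀ x : {y : Fin m // y ∈ S}, Q x) ℂ,
    A = Matrix.reindex (Equiv.piEquivPiSubtypeProd (· ∈ S) Q).symm
          (Equiv.piEquivPiSubtypeProd (· ∈ S) Q).symm
          (B ⊗ₖ (1 : Matrix (∀ x : {y : Fin m // ¬ y ∈ S}, Q x)
                            (∀ x : {y : Fin m // ¬ y ∈ S}, Q x) ℂ))

/-- The partial trace of `A` over the qudit at site `x` vanishes. -/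
def TracelessAt {m : ℕ} (Q : Fin m → Type*) [∀ x, Fintype (Q x)] [∀ x, DecidableEq (Q x)]
    (x : Fin m) (A : Matrix (∀ y, Q y) (∀ y, Q y) ℂ) : Prop :=
  ∀ f g : ∀ y, Q y,
    ∑ v : Q x, A (Function.update f x v) (Function.update g x v) = 0

section
open Matrix

variable {n : Type*} [Fintype n] [DecidableEq n]

/-- singular values -/
noncomputable def sv (A : Matrix n n ℂ) (i : n) : ℝ :=
  Real.sqrt ((Matrix.isHermitian_conjTranspose_mul_self A).eigenvalues i)

lemma sv_nonneg (A : Matrix n n ℂ) (i : n) : 0 ≤ sv A i := Real.sqrt_nonneg _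

open scoped ComplexOrder in
lemma eig_nonneg (A : Matrix n n ℂ) (i : n) :
    0 ≤ (Matrix.isHermitian_conjTranspose_mul_self A).eigenvalues i :=
  (Matrix.posSemidef_conjTranspose_mul_self A).eigenvalues_nonneg i

lemma sv_sq (A : Matrix n n ℂ) (i : n) :
    sv A i ^ 2 = (Matrix.isHermitian_conjTranspose_mul_self A).eigenvalues i :=
  Real.sq_sqrt (eig_nonneg A i)

lemma schatten_eq (p : ℝ) (A : Matrix n n ℂ) :
    schattenNorm p A = (∑ i, sv A i ^ p) ^ (1 / p) := by
  unfold schattenNorm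
  congr 1
  refine Finset.sum_congr rfl fun i _ => ?_
  rw [← sv_sq, ← Real.rpow_natCast, ← Real.rpow_mul (sv_nonneg A i)]
  congr 1
  push_cast
  ring

/-- the eigenbasis of `AᴴA` -/
noncomputable abbrev eb (A : Matrix n n ℂ) : OrthonormalBasis n ℂ (EuclideanSpace ℂ n) :=
  (Matrix.isHermitian_conjTranspose_mul_self A).eigenvectorBasis

lemma inner_A_eb (A : Matrix n n ℂ) (i j : n) :
    inner ℂ (toEuclideanCLM (𝕜 := ℂ) A (eb A i)) (toEuclideanCLM (𝕜 := ℂ) A (eb A j)) =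
      if i = j then ((sv A j ^ 2 : ℝ) : ℂ) else 0 := by
  have h1 : toEuclideanCLM (𝕜 := ℂ) (Aᴴ * A) (eb A j) = ((sv A j ^ 2 : ℝ) : ℂ) • eb A j := by
    have := (Matrix.isHermitian_conjTranspose_mul_self A).mulVec_eigenvectorBasis j
    ext k
    rw [ofLp_toEuclideanCLM]
    rw [this, sv_sq]
    simp
  rw [← ContinuousLinearMap.adjoint_inner_right, ← ContinuousLinearMap.star_eq_adjoint, ← map_star,
    ← mul_apply_eq_comp, ← map_mul, star_eq_conjTranspose, h1, inner_smul_right,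
    orthonormal_iff_ite.mp (eb A).orthonormal]
  simp

lemma norm_A_eb (A : Matrix n n ℂ) (i : n) :
    ‖toEuclideanCLM (𝕜 := ℂ) A (eb A i)‖ = sv A i := by
  have h := inner_A_eb A i i
  rw [inner_self_eq_norm_sq_to_K, if_pos rfl] at h
  have h2 : ‖toEuclideanCLM (𝕜 := ℂ) A (eb A i)‖ ^ 2 = sv A i ^ 2 := by
    apply Complex.ofReal_injective
    push_cast
    push_cast at h
    exact h
  exact (pow_left_inj₀ (norm_nonneg _) (sv_nonneg _ _) two_ne_zero).mp h2

lemma sv_le_opNorm (A : Matrix n n ℂ) (i : n) : sv A i ≤ opNorm A := by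
  rw [← norm_A_eb]
  have := (toEuclideanCLM (𝕜 := ℂ) A).le_opNorm (eb A i)
  rwa [(eb A).norm_eq_one, mul_one] at this

lemma exists_svd (A : Matrix n n ℂ) :
    ∃ U ∈ unitaryGroup n ℂ, ∃ V ∈ unitaryGroup n ℂ,
      A = U * diagonal (fun i => (sv A i : ℂ)) * V := by
  set v : n → EuclideanSpace ℂ n := fun i =>
    ((sv A i : ℂ))⁻¹ • toEuclideanCLM (𝕜 := ℂ) A (eb A i) with hv
  have hon : Orthonormal ℂ (Set.domRestrict {i | sv A i ≠ 0} v) := by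
    rw [orthonormal_iff_ite]
    rintro ⟨i, hi⟩ ⟨j, hj⟩
    simp only [Set.mem_ofPred_eq] at hi hj
    simp only [Set.domRestrict_apply, hv, inner_smul_left, inner_smul_right, inner_A_eb,
      Subtype.mk.injEq]
    split_ifs with h
    · subst h
      have hi' : (sv A i : ℂ) ≠ 0 := by exact_mod_cast hi
      simp
      field_simp
    · simp
  obtain ⟨c, hc⟩ := hon.exists_orthonormalBasis_extension_of_card_eq (by simp)
  have key : ∀ i, toEuclideanCLM (𝕜 := ℂ) A (eb A i) = (sv A i : ℂ) • c i := by
    intro i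
    by_cases h : sv A i = 0
    · rw [h]
      have := norm_A_eb A i
      rw [h, norm_eq_zero] at this
      simp [this]
    · rw [hc i h, hv]
      have : (sv A i : ℂ) ≠ 0 := by exact_mod_cast h
      simp [smul_smul, this]
  set W := (Matrix.isHermitian_conjTranspose_mul_self A).eigenvectorUnitary with hW
  set U := (EuclideanSpace.basisFun n ℂ).toBasis.toMatrix c.toBasis with hU
  refine ⟨U, (EuclideanSpace.basisFun n ℂ).toMatrix_orthonormalBasis_mem_unitary c,
    star (W : Matrix n n ℂ), (star W).2, ?_⟩
  have h1 : A * (W : Matrix n n ℂ) = U * diagonal (fun i => (sv A i : ℂ)) := by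
    ext k i
    rw [mul_diagonal]
    have := congrArg (fun x => x k) (key i)
    simp only [ofLp_toEuclideanCLM] at this
    rw [mul_apply]
    have e : U k i = c i k := by simp [hU, Module.Basis.toMatrix_apply]
    rw [e, mul_comm]
    exact this
  rw [← h1, mul_assoc, Unitary.mul_star_self_of_mem W.2, mul_one]

end

section
open Matrix

variable {n : Type*} [Fintype n] [DecidableEq n]

/-- `Tr (AᴴA)^k` -/
noncomputable def TT (k : ℕ) (A : Matrix n n ℂ) : ℝ := (trace ((Aᴴ * A) ^ k)).re

lemma conj_pow_unitary (V M : Matrix n n ℂ) (hV : V ∈ unitaryGroup n ℂ) (k : ℕ) :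
    (Vᴴ * M * V) ^ k = Vᴴ * M ^ k * V := by
  have h1 : V * Vᴴ = 1 := Unitary.mul_star_self_of_mem hV
  have h2 : Vᴴ * V = 1 := Unitary.star_mul_self_of_mem hV
  induction k with
  | zero => simp [h2]
  | succ k ih =>
    rw [pow_succ, ih, pow_succ]
    calc Vᴴ * M ^ k * V * (Vᴴ * M * V) = Vᴴ * M ^ k * (V * Vᴴ) * M * V := by
          simp only [mul_assoc]
      _ = _ := by rw [h1]; simp only [mul_assoc, mul_one, one_mul]

lemma conj_mul_usv (U V : Matrix n n ℂ) (hU : U ∈ unitaryGroup n ℂ) (d : n → ℝ) :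
    (U * diagonal (fun i => (d i : ℂ)) * V)ᴴ * (U * diagonal (fun i => (d i : ℂ)) * V) =
      Vᴴ * diagonal (fun i => ((d i ^ 2 : ℝ) : ℂ)) * V := by
  have h2 : Uᴴ * U = 1 := Unitary.star_mul_self_of_mem hU
  have h3 : (diagonal (fun i => (d i : ℂ)))ᴴ = diagonal (fun i => (d i : ℂ)) := by
    rw [diagonal_conjTranspose]
    congr 1
    ext i
    simp
  rw [conjTranspose_mul, conjTranspose_mul, h3]
  calc _ = Vᴴ * (diagonal (fun i => (d i : ℂ)) * (Uᴴ * U) * diagonal (fun i => (d i : ℂ))) * V := by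
        simp only [mul_assoc]
    _ = _ := by
        rw [h2, mul_one, diagonal_mul_diagonal]
        congr 3
        ext i
        push_cast
        ring

lemma trace_pow_usv (U V : Matrix n n ℂ) (hU : U ∈ unitaryGroup n ℂ) (hV : V ∈ unitaryGroup n ℂ)
    (d : n → ℝ) (k : ℕ) {A : Matrix n n ℂ} (hA : A = U * diagonal (fun i => (d i : ℂ)) * V) :
    trace ((Aᴴ * A) ^ k) = ((∑ i, d i ^ (2 * k) : ℝ) : ℂ) := by
  have h1 : V * Vᴴ = 1 := Unitary.mul_star_self_of_mem hV
  rw [hA, conj_mul_usv U V hU, conj_pow_unitary _ _ hV, mul_assoc, trace_mul_comm, mul_assoc, h1,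
    mul_one, diagonal_pow, trace_diagonal]
  push_cast
  refine Finset.sum_congr rfl fun i _ => ?_
  simp [pow_mul]

lemma TT_usv (U V : Matrix n n ℂ) (hU : U ∈ unitaryGroup n ℂ) (hV : V ∈ unitaryGroup n ℂ)
    (d : n → ℝ) (k : ℕ) :
    TT k (U * diagonal (fun i => (d i : ℂ)) * V) = ∑ i, d i ^ (2 * k) := by
  rw [TT, trace_pow_usv U V hU hV d k rfl, Complex.ofReal_re]

lemma trace_pow_eq (A : Matrix n n ℂ) (k : ℕ) :
    trace ((Aᴴ * A) ^ k) = ((∑ i, sv A i ^ (2 * k) : ℝ) : ℂ) := by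
  obtain ⟨U, hU, V, hV, h⟩ := exists_svd A
  exact trace_pow_usv U V hU hV _ k h

lemma TT_eq (A : Matrix n n ℂ) (k : ℕ) : TT k A = ∑ i, sv A i ^ (2 * k) := by
  rw [TT, trace_pow_eq, Complex.ofReal_re]

lemma trace_pow_TT (A : Matrix n n ℂ) (k : ℕ) : trace ((Aᴴ * A) ^ k) = ((TT k A : ℝ) : ℂ) := by
  rw [TT_eq, trace_pow_eq]

lemma TT_nonneg (A : Matrix n n ℂ) (k : ℕ) : 0 ≤ TT k A := by
  rw [TT_eq]
  exact Finset.sum_nonneg fun i _ => pow_nonneg (sv_nonneg A i) _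

lemma trace_mul_pow_comm (A B : Matrix n n ℂ) (k : ℕ) :
    trace ((A * B) ^ k) = trace ((B * A) ^ k) := by
  cases k with
  | zero => simp
  | succ k =>
    have h : ∀ j : ℕ, (A * B) ^ j * A = A * (B * A) ^ j := by
      intro j
      induction j with
      | zero => simp
      | succ j ih => rw [pow_succ', mul_assoc, ih, pow_succ']; simp only [mul_assoc]
    rw [pow_succ, ← mul_assoc, h, trace_mul_comm, ← mul_assoc, ← pow_succ']

lemma TT_conj (A : Matrix n n ℂ) (k : ℕ) : TT k Aᴴ = TT k A := by
  rw [TT, TT, conjTranspose_conjTranspose, trace_mul_pow_comm]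

/-- the dyadic norm -/
noncomputable def NN (k : ℕ) (A : Matrix n n ℂ) : ℝ := TT (2 ^ k) A ^ ((2 : ℝ) ^ (k + 1))⁻¹

lemma NN_nonneg (k : ℕ) (A : Matrix n n ℂ) : 0 ≤ NN k A := Real.rpow_nonneg (TT_nonneg _ _) _

lemma NN_pow (k : ℕ) (A : Matrix n n ℂ) : NN k A ^ (2 ^ (k + 1)) = TT (2 ^ k) A := by
  rw [NN, ← Real.rpow_natCast, ← Real.rpow_mul (TT_nonneg _ _)]
  push_cast
  rw [inv_mul_cancel₀ (by positivity), Real.rpow_one]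

lemma NN_le {k : ℕ} {A : Matrix n n ℂ} {x : ℝ} (hx : 0 ≤ x) (h : TT (2 ^ k) A ≤ x ^ (2 ^ (k + 1))) :
    NN k A ≤ x := by
  rw [← NN_pow] at h
  exact (pow_le_pow_iff_left₀ (NN_nonneg _ _) hx (by positivity)).mp h

lemma NN_conj (k : ℕ) (A : Matrix n n ℂ) : NN k Aᴴ = NN k A := by
  rw [NN, NN, TT_conj]

lemma NN_sq (k : ℕ) (A : Matrix n n ℂ) : NN k (Aᴴ * A) = NN (k + 1) A ^ 2 := by
  have h : TT (2 ^ k) (Aᴴ * A) = TT (2 ^ (k + 1)) A := by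
    rw [TT, TT, conjTranspose_mul, conjTranspose_conjTranspose, ← pow_two, ← pow_mul, pow_succ,
      mul_comm 2]
  have h2 : NN k (Aᴴ * A) ^ (2 ^ (k + 1)) = (NN (k + 1) A ^ 2) ^ (2 ^ (k + 1)) := by
    rw [NN_pow, h, ← NN_pow, ← pow_mul, pow_succ 2 (k + 1), mul_comm 2]
  exact (pow_left_inj₀ (NN_nonneg _ _) (pow_nonneg (NN_nonneg _ _) _) (by positivity)).mp h2

/-- pair up consecutive entries -/
def pairUp : List (Matrix n n ℂ) → List (Matrix n n ℂ)
  | a :: b :: l => (a * b) :: pairUp l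
  | _ => []

lemma TT_one (A : Matrix n n ℂ) : TT 1 A = ∑ x : n × n, ‖A x.1 x.2‖ ^ 2 := by
  rw [TT, pow_one, trace, Complex.re_sum, Fintype.sum_prod_type, Finset.sum_comm]
  refine Finset.sum_congr rfl fun i _ => ?_
  rw [diag_apply, mul_apply, Complex.re_sum]
  refine Finset.sum_congr rfl fun j _ => ?_
  rw [conjTranspose_apply, Complex.star_def, ← Complex.normSq_eq_conj_mul_self, Complex.ofReal_re,
    Complex.normSq_eq_norm_sq]

lemma trace_mul_le (A B : Matrix n n ℂ) : ‖trace (A * B)‖ ≤ NN 0 A * NN 0 B := by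
  have h1 : ∀ A : Matrix n n ℂ, NN 0 A = Real.sqrt (∑ x : n × n, ‖A x.1 x.2‖ ^ 2) := by
    intro A
    rw [NN, Real.sqrt_eq_rpow, ← TT_one]
    norm_num
  rw [← NN_conj 0 B, h1, h1]
  refine le_trans ?_ (Real.sum_mul_le_sqrt_mul_sqrt _ _ _)
  rw [Fintype.sum_prod_type, trace]
  refine (norm_sum_le _ _).trans (Finset.sum_le_sum fun i _ => ?_)
  rw [diag_apply, mul_apply]
  refine (norm_sum_le _ _).trans (Finset.sum_le_sum fun j _ => ?_)
  simp

lemma NN_mul_le {k : ℕ} (hk : ∀ l : List (Matrix n n ℂ), l.length = 2 ^ (k + 1) →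
      ‖trace l.prod‖ ≤ (l.map (NN k)).prod) (A B : Matrix n n ℂ) :
    NN k (A * B) ≤ NN (k + 1) A * NN (k + 1) B := by
  refine NN_le (mul_nonneg (NN_nonneg _ _) (NN_nonneg _ _)) ?_
  have h := hk (List.replicate (2 ^ k) [Aᴴ * A, B * Bᴴ]).flatten (by simp [pow_succ])
  have e : trace (((A * B)ᴴ * (A * B)) ^ (2 ^ k)) = trace ((Aᴴ * A * (B * Bᴴ)) ^ (2 ^ k)) := by
    rw [conjTranspose_mul, mul_assoc, trace_mul_pow_comm]
    simp only [mul_assoc]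
  have e2 : NN k (B * Bᴴ) = NN (k + 1) B ^ 2 := by
    have := NN_sq k Bᴴ
    rwa [conjTranspose_conjTranspose, NN_conj] at this
  simp only [List.prod_flatten, List.map_flatten, List.map_replicate, List.prod_replicate,
    List.prod_cons, List.prod_nil, mul_one, List.map_cons, List.map_nil, NN_sq, e2] at h
  rw [← e, trace_pow_TT, Complex.norm_real, Real.norm_of_nonneg (TT_nonneg _ _)] at h
  rwa [pow_succ 2 k, mul_comm (2 ^ k) 2, pow_mul, mul_pow]

lemma pairUp_spec (f g : Matrix n n ℂ → ℝ) (hf : ∀ A, 0 ≤ f A) (hg : ∀ A, 0 ≤ g A)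
    (hfg : ∀ A B, f (A * B) ≤ g A * g B) :
    ∀ (N : ℕ) (l : List (Matrix n n ℂ)), l.length = 2 * N →
      (pairUp l).length = N ∧ (pairUp l).prod = l.prod ∧
      ((pairUp l).map f).prod ≤ (l.map g).prod ∧ 0 ≤ (l.map g).prod := by
  intro N
  induction N with
  | zero =>
    intro l hl
    have : l = [] := List.length_eq_zero_iff.mp (by simpa using hl)
    subst this
    simp [pairUp]
  | succ N ih =>
    intro l hl
    match l, hl with
    | [], hl => simp at hl
    | [a], hl => simp at hl; omega
    | a :: b :: l, hl =>
      obtain ⟨h1, h2, h3, h4⟩ := ih l (by simp at hl; omega)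
      refine ⟨by simp [pairUp, h1], by simp [pairUp, h2, mul_assoc], ?_, ?_⟩
      · simp only [pairUp, List.map_cons, List.prod_cons, ← mul_assoc]
        have h5 : 0 ≤ ((pairUp l).map f).prod := List.prod_nonneg (by
          intro x hx
          obtain ⟨A, _, rfl⟩ := List.mem_map.mp hx
          exact hf A)
        exact mul_le_mul (hfg a b) h3 h5 (mul_nonneg (hg _) (hg _))
      · simp only [List.map_cons, List.prod_cons]
        exact mul_nonneg (hg _) (mul_nonneg (hg _) h4)

lemma dyadic_holder (k : ℕ) : ∀ l : List (Matrix n n ℂ), l.length = 2 ^ (k + 1) →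
      ‖trace l.prod‖ ≤ (l.map (NN k)).prod := by
  induction k with
  | zero =>
    intro l hl
    match l, hl with
    | [a, b], _ => simpa using trace_mul_le a b
  | succ k ih =>
    intro l hl
    obtain ⟨h1, h2, h3, h4⟩ := pairUp_spec (NN k) (NN (k + 1)) (NN_nonneg k) (NN_nonneg _)
      (NN_mul_le ih) (2 ^ (k + 1)) l (by rw [hl]; ring)
    rw [← h2]
    exact (ih _ h1).trans h3

end

section
open Matrix Filter Topology

variable {n : Type*} [Fintype n] [DecidableEq n]

/-- `U diag(d) V` -/
noncomputable def usv (U : Matrix n n ℂ) (d : n → ℝ) (V : Matrix n n ℂ) : Matrix n n ℂ :=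
  U * diagonal (fun i => (d i : ℂ)) * V

lemma usv_mul (U V W : Matrix n n ℂ) (hU : U ∈ unitaryGroup n ℂ) (d e : n → ℝ) :
    usv W d Uᴴ * usv U e V = usv W (fun i => d i * e i) V := by
  have h2 : Uᴴ * U = 1 := Unitary.star_mul_self_of_mem hU
  unfold usv
  calc _ = W * (diagonal (fun i => (d i : ℂ)) * (Uᴴ * U) * diagonal (fun i => (e i : ℂ))) * V := by
        simp only [mul_assoc]
    _ = _ := by
        rw [h2, mul_one, diagonal_mul_diagonal]
        push_cast
        rfl

/-- a chunk of `c` factors whose product is `U diag(d^c) V` -/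
noncomputable def chunk (U : Matrix n n ℂ) (d : n → ℝ) (V : Matrix n n ℂ) (c : ℕ) :
    List (Matrix n n ℂ) :=
  List.replicate (c - 1) (usv U d Uᴴ) ++ [usv U d V]

lemma chunk_prod (U V : Matrix n n ℂ) (hU : U ∈ unitaryGroup n ℂ) (d : n → ℝ) (c : ℕ) (hc : 1 ≤ c) :
    (chunk U d V c).prod = usv U (fun i => d i ^ c) V := by
  obtain ⟨c, rfl⟩ := Nat.exists_eq_add_of_le' hc
  simp only [chunk, Nat.add_sub_cancel, List.prod_append, List.prod_replicate, List.prod_singleton]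
  clear hc
  induction c with
  | zero => simp
  | succ c ih =>
    rw [pow_succ', mul_assoc, ih, usv_mul _ _ _ hU]
    congr 1
    ext i
    ring

lemma NN_usv (U V : Matrix n n ℂ) (hU : U ∈ unitaryGroup n ℂ) (hV : V ∈ unitaryGroup n ℂ)
    (d : n → ℝ) (hd : ∀ i, 0 ≤ d i) (k : ℕ) :
    NN k (usv U (fun i => d i ^ ((2 : ℝ) ^ (k + 1))⁻¹) V) = (∑ i, d i) ^ ((2 : ℝ) ^ (k + 1))⁻¹ := by
  rw [NN, usv, TT_usv U V hU hV]
  congr 1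
  refine Finset.sum_congr rfl fun i _ => ?_
  rw [← Real.rpow_natCast, ← Real.rpow_mul (hd i), ← pow_succ']
  push_cast
  rw [inv_mul_cancel₀ (by positivity), Real.rpow_one]

lemma NN_one (k : ℕ) :
    NN k (1 : Matrix n n ℂ) = (Fintype.card n : ℝ) ^ ((2 : ℝ) ^ (k + 1))⁻¹ := by
  rw [NN, TT]
  simp

variable {ι : Type*}

lemma holder_approx [Nonempty n] (U V : ι → Matrix n n ℂ) (hU : ∀ j, U j ∈ unitaryGroup n ℂ)
    (hV : ∀ j, V j ∈ unitaryGroup n ℂ) (d : ι → n → ℝ) (hd : ∀ j i, 0 ≤ d j i)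
    (k : ℕ) (c : ι → ℕ) (l : List ι) (hc : ∀ j ∈ l, 1 ≤ c j) (hl : (l.map c).sum ≤ 2 ^ (k + 1)) :
    ‖trace (l.map fun j => usv (U j) (fun i => d j i ^ ((c j : ℝ) / (2 : ℝ) ^ (k + 1))) (V j)).prod‖
      ≤ (l.map fun j => (∑ i, d j i) ^ ((c j : ℝ) / (2 : ℝ) ^ (k + 1))).prod *
        (Fintype.card n : ℝ) ^ (1 - (l.map fun j => (c j : ℝ) / (2 : ℝ) ^ (k + 1)).sum) := by
  set e : ℝ := ((2 : ℝ) ^ (k + 1))⁻¹ with he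
  have hcard : (0 : ℝ) < Fintype.card n := by exact_mod_cast Fintype.card_pos
  set L : List (Matrix n n ℂ) :=
    (l.map fun j => chunk (U j) (fun i => d j i ^ e) (V j) (c j)).flatten ++
      List.replicate (2 ^ (k + 1) - (l.map c).sum) 1 with hL
  have hlen : L.length = 2 ^ (k + 1) := by
    have : (l.map fun j => (chunk (U j) (fun i => d j i ^ e) (V j) (c j)).length) = l.map c := by
      refine List.map_congr_left fun j hj => ?_
      have := hc j hj
      simp [chunk]
      omega
    simp only [hL, List.length_append, List.length_flatten, List.map_map, Function.comp_def,
      List.length_replicate, this]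
    omega
  have h := dyadic_holder k L hlen
  have e1 : L.prod = (l.map fun j =>
      usv (U j) (fun i => d j i ^ ((c j : ℝ) / (2 : ℝ) ^ (k + 1))) (V j)).prod := by
    simp only [hL, List.prod_append, List.prod_flatten, List.prod_replicate, one_pow, mul_one,
      List.map_map]
    congr 1
    refine List.map_congr_left fun j hj => ?_
    simp only [Function.comp]
    rw [chunk_prod _ _ (hU j) _ _ (hc j hj)]
    congr 1
    ext i
    rw [← Real.rpow_natCast, ← Real.rpow_mul (hd j i)]
    congr 1
    rw [he]
    field_simp
  have e2 : (L.map (NN k)).prod =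
      (l.map fun j => (∑ i, d j i) ^ ((c j : ℝ) / (2 : ℝ) ^ (k + 1))).prod *
        (Fintype.card n : ℝ) ^ (1 - (l.map fun j => (c j : ℝ) / (2 : ℝ) ^ (k + 1)).sum) := by
    simp only [hL, List.map_append, List.prod_append, List.map_flatten, List.prod_flatten,
      List.map_replicate, List.prod_replicate, List.map_map]
    congr 1
    · congr 1
      refine List.map_congr_left fun j hj => ?_
      simp only [Function.comp, chunk, List.map_append, List.map_replicate, List.prod_append,
        List.prod_replicate, List.map_cons, List.map_nil, List.prod_singleton]
      have hUs : (U j)ᴴ ∈ unitaryGroup n ℂ := Unitary.star_mem (hU j)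
      rw [he, NN_usv _ _ (hU j) (hV j) _ (hd j), NN_usv _ _ (hU j) hUs _ (hd j), ← pow_succ,
        Nat.sub_add_cancel (hc j hj), ← Real.rpow_natCast,
        ← Real.rpow_mul (Finset.sum_nonneg fun i _ => hd j i)]
      congr 1
      field_simp
    · rw [NN_one, ← Real.rpow_natCast, ← Real.rpow_mul hcard.le]
      congr 1
      have hs : (l.map fun j => (c j : ℝ) / (2 : ℝ) ^ (k + 1)).sum =
          ((l.map c).sum : ℝ) / (2 : ℝ) ^ (k + 1) := by
        clear hl h hL hlen e1 hc
        induction l with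
        | nil => simp
        | cons a l ih => simp [ih, add_div]
      rw [hs, Nat.cast_sub hl]
      push_cast
      field_simp
  rw [e1, e2] at h
  exact h

lemma holder_lim [Nonempty n] (U V : ι → Matrix n n ℂ) (hU : ∀ j, U j ∈ unitaryGroup n ℂ)
    (hV : ∀ j, V j ∈ unitaryGroup n ℂ) (d : ι → n → ℝ) (hd : ∀ j i, 0 ≤ d j i)
    (a : ι → ℝ) (l : List ι) (ha : ∀ j ∈ l, 0 < a j) (hl : (l.map a).sum = 1) :
    ‖trace (l.map fun j => usv (U j) (fun i => d j i ^ (a j)) (V j)).prod‖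
      ≤ (l.map fun j => (∑ i, d j i) ^ (a j)).prod := by
  have hcard : (0 : ℝ) < Fintype.card n := by exact_mod_cast Fintype.card_pos
  set c : ℕ → ι → ℕ := fun k j => ⌊a j * (2 : ℝ) ^ (k + 1)⌋₊ with hc
  have h2 : Tendsto (fun k : ℕ => (2 : ℝ) ^ (k + 1)) atTop atTop :=
    (tendsto_pow_atTop_atTop_of_one_lt one_lt_two).comp (tendsto_add_atTop_nat 1)
  have hlim : ∀ j ∈ l, Tendsto (fun k => (c k j : ℝ) / (2 : ℝ) ^ (k + 1)) atTop (𝓝 (a j)) := by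
    intro j hj
    exact (tendsto_nat_floor_mul_div_atTop (ha j hj).le).comp h2
  have hev : ∀ᶠ k in atTop, ∀ j ∈ l, 1 ≤ c k j := by
    have : ∀ l' : List ι, (∀ j ∈ l', 0 < a j) → ∀ᶠ k in atTop, ∀ j ∈ l', 1 ≤ c k j := by
      intro l'
      induction l' with
      | nil => simp
      | cons x l' ih =>
        intro h
        have h1 := ih fun j hj => h j (List.mem_cons_of_mem _ hj)
        have h3 : ∀ᶠ k : ℕ in atTop, 1 ≤ a x * (2 : ℝ) ^ (k + 1) :=
          (h2.const_mul_atTop (h x List.mem_cons_self)).eventually_ge_atTop 1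
        filter_upwards [h1, h3] with k h4 h5 j hj
        rcases List.mem_cons.mp hj with rfl | hj
        · exact Nat.le_floor (by simpa using h5)
        · exact h4 j hj
    exact this l ha
  have hsum : ∀ k, (l.map (c k)).sum ≤ 2 ^ (k + 1) := by
    intro k
    have : ∀ l' : List ι, (∀ j ∈ l', 0 < a j) →
        ((l'.map (c k)).sum : ℝ) ≤ (l'.map a).sum * (2 : ℝ) ^ (k + 1) := by
      intro l'
      induction l' with
      | nil => simp
      | cons x l' ih =>
        intro h
        have h1 := ih fun j hj => h j (List.mem_cons_of_mem _ hj)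
        have h2 : (c k x : ℝ) ≤ a x * (2 : ℝ) ^ (k + 1) :=
          Nat.floor_le (mul_nonneg (h x List.mem_cons_self).le (by positivity))
        simp only [List.map_cons, List.sum_cons, Nat.cast_add, add_mul]
        linarith
    have := this l ha
    rw [hl, one_mul] at this
    exact_mod_cast this
  have hL : Tendsto (fun k => ‖trace (l.map fun j => usv (U j)
      (fun i => d j i ^ ((c k j : ℝ) / (2 : ℝ) ^ (k + 1))) (V j)).prod‖) atTop
      (𝓝 ‖trace (l.map fun j => usv (U j) (fun i => d j i ^ (a j)) (V j)).prod‖) := by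
    have hp := tendsto_list_prod (M := Matrix n n ℂ) (x := atTop)
      (f := fun j k => usv (U j) (fun i => d j i ^ ((c k j : ℝ) / (2 : ℝ) ^ (k + 1))) (V j))
      (a := fun j => usv (U j) (fun i => d j i ^ (a j)) (V j)) l (by
        intro j hj
        have hcont : Continuous fun v : n → ℝ => usv (U j) v (V j) := by
          unfold usv
          fun_prop
        refine (hcont.tendsto _).comp (tendsto_pi_nhds.mpr fun i => ?_)
        exact tendsto_const_nhds.rpow (hlim j hj) (Or.inr (ha j hj)))
    have ht : Continuous fun M : Matrix n n ℂ => ‖trace M‖ := by fun_prop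
    exact (ht.tendsto _).comp hp
  have hR : Tendsto (fun k => (l.map fun j => (∑ i, d j i) ^ ((c k j : ℝ) / (2 : ℝ) ^ (k + 1))).prod *
        (Fintype.card n : ℝ) ^ (1 - (l.map fun j => (c k j : ℝ) / (2 : ℝ) ^ (k + 1)).sum)) atTop
      (𝓝 ((l.map fun j => (∑ i, d j i) ^ (a j)).prod * (Fintype.card n : ℝ) ^ (1 - (l.map a).sum))) := by
    refine Tendsto.mul ?_ ?_
    · exact tendsto_list_prod (M := ℝ) (x := atTop)
        (f := fun j k => (∑ i, d j i) ^ ((c k j : ℝ) / (2 : ℝ) ^ (k + 1)))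
        (a := fun j => (∑ i, d j i) ^ (a j)) l
        fun j hj => tendsto_const_nhds.rpow (hlim j hj) (Or.inr (ha j hj))
    · refine tendsto_const_nhds.rpow (tendsto_const_nhds.sub ?_) (Or.inl hcard.ne')
      exact tendsto_list_sum (M := ℝ) (x := atTop)
        (f := fun j k => (c k j : ℝ) / (2 : ℝ) ^ (k + 1)) (a := a) l hlim
  have := le_of_tendsto_of_tendsto hL hR (hev.mono fun k hk =>
    holder_approx U V hU hV d hd k (c k) l hk (hsum k))
  simpa [hl] using this

/-- Hölder for traces of products -/
lemma holder_usv [Nonempty n] (U V : ι → Matrix n n ℂ) (hU : ∀ j, U j ∈ unitaryGroup n ℂ)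
    (hV : ∀ j, V j ∈ unitaryGroup n ℂ) (d : ι → n → ℝ) (hd : ∀ j i, 0 ≤ d j i)
    (a : ι → ℝ) (l : List ι) (ha : ∀ j ∈ l, 0 < a j) (hl : (l.map a).sum = 1) :
    ‖trace (l.map fun j => usv (U j) (d j) (V j)).prod‖
      ≤ (l.map fun j => (∑ i, d j i ^ (a j)⁻¹) ^ (a j)).prod := by
  have h := holder_lim U V hU hV (fun j i => d j i ^ (a j)⁻¹)
    (fun j i => Real.rpow_nonneg (hd j i) _) a l ha hl
  have e : (l.map fun j => usv (U j) (fun i => (d j i ^ (a j)⁻¹) ^ (a j)) (V j)) =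
      l.map fun j => usv (U j) (d j) (V j) := by
    refine List.map_congr_left fun j hj => ?_
    congr 1
    ext i
    rw [← Real.rpow_mul (hd j i), inv_mul_cancel₀ (ha j hj).ne', Real.rpow_one]
  rwa [e] at h

end

section
open Matrix Filter Topology

variable {n : Type*} [Fintype n] [DecidableEq n]

/-- the even Schatten norm -/
noncomputable def nu (k : ℕ) (A : Matrix n n ℂ) : ℝ := TT k A ^ ((2 * k : ℝ))⁻¹

lemma nu_nonneg (k : ℕ) (A : Matrix n n ℂ) : 0 ≤ nu k A := Real.rpow_nonneg (TT_nonneg _ _) _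

lemma nu_pow {k : ℕ} (hk : 1 ≤ k) (A : Matrix n n ℂ) : nu k A ^ (2 * k) = TT k A := by
  have : (k : ℝ) ≠ 0 := by positivity
  rw [nu, ← Real.rpow_natCast, ← Real.rpow_mul (TT_nonneg _ _)]
  push_cast
  rw [inv_mul_cancel₀ (by positivity), Real.rpow_one]

lemma nu_conj (k : ℕ) (A : Matrix n n ℂ) : nu k Aᴴ = nu k A := by
  rw [nu, nu, TT_conj]

lemma even_holder [Nonempty n] {k : ℕ} (hk : 1 ≤ k) (l : List (Matrix n n ℂ))
    (hl : l.length = 2 * k) : ‖trace l.prod‖ ≤ (l.map (nu k)).prod := by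
  choose U hU V hV h using fun A : Matrix n n ℂ => exists_svd A
  have hk0 : (k : ℝ) ≠ 0 := by positivity
  have := holder_usv U V hU hV (fun A => sv A) (fun A i => sv_nonneg A i)
    (fun _ => ((2 * k : ℝ))⁻¹) l (fun _ _ => by positivity) (by
      rw [List.map_const', List.sum_replicate, hl]
      simp
      field_simp)
  have e : (l.map fun j => usv (U j) (sv j) (V j)) = l := by
    conv_rhs => rw [← List.map_id l]
    refine List.map_congr_left fun A _ => (h A).symm
  rw [e] at this
  refine this.trans (le_of_eq ?_)
  congr 1
  refine List.map_congr_left fun A _ => ?_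
  rw [nu, TT_eq, inv_inv]
  congr 1
  refine Finset.sum_congr rfl fun i _ => ?_
  rw [← Real.rpow_natCast]
  push_cast
  rfl

/-- alternating word -/
def alt (P Q : Matrix n n ℂ) (k : ℕ) : Fin (2 * k) → Matrix n n ℂ :=
  fun i => if i.val % 2 = 0 then P else Q

lemma alt_prod (P Q : Matrix n n ℂ) (k : ℕ) : (List.ofFn (alt P Q k)).prod = (P * Q) ^ k := by
  induction k with
  | zero => simp
  | succ k ih =>
    have : List.ofFn (alt P Q (k + 1)) = P :: Q :: List.ofFn (alt P Q k) := by
      change List.ofFn (n := 2 * k + 1 + 1) (alt P Q (k + 1)) = _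
      rw [List.ofFn_succ, List.ofFn_succ]
      simp only [alt]
      congr 2
      congr 1
      ext1 i
      simp only [Fin.val_succ]
      congr 1
      simp only [eq_iff_iff]
      omega
    rw [this, List.prod_cons, List.prod_cons, ih, pow_succ', mul_assoc]

lemma expand_bound [Nonempty n] {k : ℕ} (hk : 1 ≤ k) (X Y : Matrix n n ℂ) :
    TT k (X + Y) + TT k (X - Y) ≤
      (nu k X + nu k Y) ^ (2 * k) + (nu k X - nu k Y) ^ (2 * k) := by
  set F := MultilinearMap.mkPiAlgebraFin ℂ (2 * k) (Matrix n n ℂ) with hF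
  set a := alt Xᴴ X k with ha
  set b := alt Yᴴ Y k with hb
  have h1 : trace (F (a + b)) = ((TT k (X + Y) : ℝ) : ℂ) := by
    have : a + b = alt (X + Y)ᴴ (X + Y) k := by
      ext1 i
      simp only [ha, hb, alt, Pi.add_apply, conjTranspose_add]
      split_ifs <;> rfl
    rw [this, hF, MultilinearMap.mkPiAlgebraFin_apply, alt_prod, trace_pow_TT]
  have h2 : trace (F (a + fun i => (-1 : ℂ) • b i)) = ((TT k (X - Y) : ℝ) : ℂ) := by
    have : (a + fun i => (-1 : ℂ) • b i) = alt (X - Y)ᴴ (X - Y) k := by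
      ext1 i
      simp only [ha, hb, alt, Pi.add_apply, conjTranspose_sub]
      split_ifs <;> simp [sub_eq_add_neg]
    rw [this, hF, MultilinearMap.mkPiAlgebraFin_apply, alt_prod, trace_pow_TT]
  rw [F.map_add_univ, trace_sum] at h1 h2
  have h3 : ∀ s : Finset (Fin (2 * k)), F (s.piecewise a fun i => (-1 : ℂ) • b i) =
      ((-1 : ℂ) ^ (2 * k - s.card)) • F (s.piecewise a b) := by
    intro s
    have := F.map_piecewise_smul (fun _ => (-1 : ℂ)) (s.piecewise a b) sᶜ
    rw [Finset.prod_const, Finset.card_compl, Fintype.card_fin] at this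
    rw [← this]
    congr 1
    ext1 i
    by_cases hi : i ∈ s <;> simp [Finset.piecewise, hi]
  have h4 : ∀ s : Finset (Fin (2 * k)), ‖trace (F (s.piecewise a b))‖ ≤
      nu k X ^ s.card * nu k Y ^ (2 * k - s.card) := by
    intro s
    rw [hF, MultilinearMap.mkPiAlgebraFin_apply]
    refine (even_holder hk _ (by simp)).trans (le_of_eq ?_)
    rw [List.map_ofFn, List.prod_ofFn]
    have : ∀ i, (nu k ∘ s.piecewise a b) i = if i ∈ s then nu k X else nu k Y := by
      intro i
      by_cases hi : i ∈ s
      · simp only [Function.comp, Finset.piecewise, hi, if_true, ha, alt]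
        split_ifs <;> simp [nu_conj]
      · simp only [Function.comp, Finset.piecewise, hi, if_false, hb, alt]
        split_ifs <;> simp [nu_conj]
    simp only [this]
    rw [Finset.prod_ite, Finset.prod_const, Finset.prod_const]
    congr 2
    · simp
    · rw [Finset.filter_not]
      simp [← Finset.compl_eq_univ_sdiff, Finset.card_compl]
  have h5 : TT k (X + Y) + TT k (X - Y) = ∑ s : Finset (Fin (2 * k)),
      (1 + (-1 : ℝ) ^ (2 * k - s.card)) * (trace (F (s.piecewise a b))).re := by
    have e1 := congrArg Complex.re h1
    have e2 := congrArg Complex.re h2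
    rw [Complex.ofReal_re, Complex.re_sum] at e1 e2
    rw [← e1, ← e2, ← Finset.sum_add_distrib]
    refine Finset.sum_congr rfl fun s _ => ?_
    rw [h3, trace_smul, smul_eq_mul]
    have : ((-1 : ℂ) ^ (2 * k - s.card)) = (((-1 : ℝ) ^ (2 * k - s.card) : ℝ) : ℂ) := by
      push_cast; rfl
    rw [this, Complex.re_ofReal_mul]
    ring
  have h6 : (nu k X + nu k Y) ^ (2 * k) + (nu k X - nu k Y) ^ (2 * k) =
      ∑ s : Finset (Fin (2 * k)),
      (1 + (-1 : ℝ) ^ (2 * k - s.card)) * (nu k X ^ s.card * nu k Y ^ (2 * k - s.card)) := by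
    have e1 := Fintype.sum_pow_mul_eq_add_pow (Fin (2 * k)) (nu k X) (nu k Y)
    have e2 := Fintype.sum_pow_mul_eq_add_pow (Fin (2 * k)) (nu k X) (- nu k Y)
    rw [Fintype.card_fin] at e1 e2
    rw [sub_eq_add_neg, ← e1, ← e2, ← Finset.sum_add_distrib]
    refine Finset.sum_congr rfl fun s _ => ?_
    rw [neg_pow (nu k Y)]
    ring
  rw [h5, h6]
  refine Finset.sum_le_sum fun s _ => mul_le_mul_of_nonneg_left
    ((Complex.re_le_norm _).trans (h4 s)) ?_
  rcases neg_one_pow_eq_or ℝ (2 * k - s.card) with h | h <;> rw [h] <;> norm_num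

lemma choose_bound (k j : ℕ) (hk : 1 ≤ k) (hj : j ≤ k) :
    ((2 * k).choose (2 * j) : ℝ) ≤ k.choose j * (2 * k - 1 : ℝ) ^ j := by
  have hk1 : (1 : ℝ) ≤ k := by exact_mod_cast hk
  induction j with
  | zero => simp
  | succ j ih =>
    have ih := ih (by omega)
    have h1 : ((2 * k).choose (2 * j + 1) : ℝ) * (2 * j + 1) =
        (2 * k).choose (2 * j) * (2 * k - 2 * j) := by
      have := Nat.choose_succ_right_eq (2 * k) (2 * j)
      have h := congrArg (Nat.cast : ℕ → ℝ) this
      rw [Nat.cast_mul, Nat.cast_mul, Nat.cast_sub (by omega)] at h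
      push_cast at h
      exact h
    have h2 : ((2 * k).choose (2 * (j + 1)) : ℝ) * (2 * j + 2) =
        (2 * k).choose (2 * j + 1) * (2 * k - (2 * j + 1)) := by
      have := Nat.choose_succ_right_eq (2 * k) (2 * j + 1)
      have h := congrArg (Nat.cast : ℕ → ℝ) this
      rw [Nat.cast_mul, Nat.cast_mul, Nat.cast_sub (by omega)] at h
      push_cast at h
      rw [show 2 * (j + 1) = 2 * j + 1 + 1 by ring]
      rw [← h]
      ring
    have h3 : (k.choose (j + 1) : ℝ) * (j + 1) = k.choose j * (k - j) := by
      have := Nat.choose_succ_right_eq k j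
      have h := congrArg (Nat.cast : ℕ → ℝ) this
      rw [Nat.cast_mul, Nat.cast_mul, Nat.cast_sub (by omega)] at h
      push_cast at h
      exact h
    have hjk : (j : ℝ) + 1 ≤ k := by exact_mod_cast hj
    have hj0 : (0 : ℝ) ≤ j := by positivity
    have h4 : ((2 * k).choose (2 * (j + 1)) : ℝ) * ((2 * j + 1) * (j + 1)) =
        (2 * k).choose (2 * j) * ((k - j) * (2 * k - (2 * j + 1))) := by
      linear_combination ((2 * j + 1) / 2 : ℝ) * h2 + ((2 * k - (2 * j + 1)) / 2 : ℝ) * h1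
    have h5 : ((2 * k).choose (2 * (j + 1)) : ℝ) * ((2 * j + 1) * (j + 1)) ≤
        (k.choose (j + 1) * (2 * k - 1 : ℝ) ^ (j + 1)) * ((2 * j + 1) * (j + 1)) := by
      rw [h4]
      calc ((2 * k).choose (2 * j) : ℝ) * ((k - j) * (2 * k - (2 * j + 1)))
          ≤ (k.choose j * (2 * k - 1 : ℝ) ^ j) * ((k - j) * (2 * k - (2 * j + 1))) := by
            apply mul_le_mul_of_nonneg_right ih
            apply mul_nonneg <;> linarith
        _ ≤ (k.choose j * (2 * k - 1 : ℝ) ^ j) * ((k - j) * ((2 * k - 1) * (2 * j + 1))) := by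
            apply mul_le_mul_of_nonneg_left
            · apply mul_le_mul_of_nonneg_left _ (by linarith)
              nlinarith
            · apply mul_nonneg (by positivity)
              apply pow_nonneg
              linarith
        _ = _ := by
            rw [pow_succ]
            linear_combination (-(2 * k - 1 : ℝ) ^ j * (2 * k - 1) * (2 * j + 1)) * h3
    exact le_of_mul_le_mul_right h5 (by positivity)

lemma sum_even_odd (f : ℕ → ℝ) (k : ℕ) : ∑ j ∈ Finset.range (2 * k + 1), f j =
    ∑ i ∈ Finset.range (k + 1), f (2 * i) + ∑ i ∈ Finset.range k, f (2 * i + 1) := by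
  induction k with
  | zero => simp
  | succ k ih =>
    rw [show 2 * (k + 1) + 1 = 2 * k + 1 + 1 + 1 by ring, Finset.sum_range_succ,
      Finset.sum_range_succ, ih, Finset.sum_range_succ (fun i => f (2 * i)) (k + 1),
      Finset.sum_range_succ (fun i => f (2 * i + 1)) k,
      show 2 * (k + 1) = 2 * k + 1 + 1 by ring]
    ring

lemma two_point {k : ℕ} (hk : 1 ≤ k) (x y : ℝ) :
    (x + y) ^ (2 * k) + (x - y) ^ (2 * k) ≤ 2 * (x ^ 2 + (2 * k - 1) * y ^ 2) ^ k := by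
  have h1 : (x + y) ^ (2 * k) + (x - y) ^ (2 * k) = ∑ j ∈ Finset.range (2 * k + 1),
      (1 + (-1) ^ j) * (y ^ j * x ^ (2 * k - j) * (2 * k).choose j) := by
    rw [add_comm x y, sub_eq_neg_add, add_pow, add_pow, ← Finset.sum_add_distrib]
    refine Finset.sum_congr rfl fun j _ => ?_
    rw [neg_pow]
    ring
  have h2 : (x ^ 2 + (2 * k - 1) * y ^ 2) ^ k = ∑ i ∈ Finset.range (k + 1),
      ((2 * k - 1) * y ^ 2) ^ i * (x ^ 2) ^ (k - i) * k.choose i := by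
    rw [add_comm, add_pow]
  rw [h1, sum_even_odd, h2, Finset.mul_sum]
  have h3 : ∑ i ∈ Finset.range k, (1 + (-1 : ℝ) ^ (2 * i + 1)) *
      (y ^ (2 * i + 1) * x ^ (2 * k - (2 * i + 1)) * (2 * k).choose (2 * i + 1)) = 0 := by
    refine Finset.sum_eq_zero fun i _ => ?_
    rw [pow_succ, pow_mul]
    norm_num
  rw [h3, add_zero]
  refine Finset.sum_le_sum fun i hi => ?_
  have hi : i ≤ k := by simpa [Nat.lt_succ_iff] using hi
  have := choose_bound k i hk hi
  rw [pow_mul (-1 : ℝ), ← Nat.mul_sub, pow_mul y, pow_mul x, mul_pow]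
  norm_num
  have hp : 0 ≤ (y ^ 2) ^ i * (x ^ 2) ^ (k - i) := by positivity
  nlinarith [mul_le_mul_of_nonneg_left this hp]

lemma bcl [Nonempty n] {k : ℕ} (hk : 1 ≤ k) (X Y : Matrix n n ℂ) :
    nu k (X + Y) ^ 2 + nu k (X - Y) ^ 2 ≤ 2 * (nu k X ^ 2 + (2 * k - 1) * nu k Y ^ 2) := by
  have h1 := expand_bound hk X Y
  have h2 := two_point hk (nu k X) (nu k Y)
  rw [← nu_pow hk, ← nu_pow hk, pow_mul, pow_mul] at h1
  have hk1 : (1 : ℝ) ≤ k := by exact_mod_cast hk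
  have hC : 0 ≤ nu k X ^ 2 + (2 * k - 1) * nu k Y ^ 2 := by
    have : (0 : ℝ) ≤ 2 * k - 1 := by linarith
    positivity
  refine (pow_le_pow_iff_left₀ (by positivity) (by positivity) (by omega : k ≠ 0)).mp ?_
  have h3 := add_pow_le (sq_nonneg (nu k (X + Y))) (sq_nonneg (nu k (X - Y))) k
  refine h3.trans ?_
  rw [mul_pow]
  obtain ⟨k, rfl⟩ := Nat.exists_eq_add_of_le' hk
  simp only [Nat.add_sub_cancel] at *
  have h4 : (0 : ℝ) < 2 ^ k := by positivity
  rw [pow_succ 2 k, mul_assoc]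
  apply mul_le_mul_of_nonneg_left _ h4.le
  linarith

lemma telescoping (φ : ℝ → ℝ) (C : ℝ)
    (h1 : ∀ s h, φ (s + h) + φ (s - h) ≤ 2 * φ s + 2 * C * h ^ 2) (h2 : ∀ t, φ 0 ≤ φ t) :
    φ 1 ≤ φ 0 + C := by
  have key : ∀ N : ℕ, φ 1 ≤ φ 0 + C * (1 + 1 / ((N : ℝ) + 1)) := by
    intro N
    set h : ℝ := 1 / ((N : ℝ) + 1) with hh
    have hN : ((N : ℝ) + 1) ≠ 0 := by positivity
    have a1 : ∀ k : ℕ, φ ((k + 1) * h) - φ (k * h) ≤ 2 * C * h ^ 2 * (k + 1) := by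
      intro k
      induction k with
      | zero =>
        have := h1 0 h
        have h3 := h2 (0 - h)
        simp only [Nat.cast_zero, zero_add, one_mul, zero_mul, mul_one] at *
        linarith
      | succ k ih =>
        have := h1 ((k + 1) * h) h
        rw [show (k + 1) * h + h = ((k : ℝ) + 1 + 1) * h by ring,
          show (k + 1) * h - h = (k : ℝ) * h by ring] at this
        push_cast
        linarith
    have a2 : ∀ k : ℕ, φ (k * h) ≤ φ 0 + C * h ^ 2 * (k * (k + 1)) := by
      intro k
      induction k with
      | zero => simp
      | succ k ih =>
        have := a1 k
        push_cast
        linarith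
    have a3 := a2 (N + 1)
    push_cast at a3
    rw [show ((N : ℝ) + 1) * h = 1 by rw [hh]; field_simp] at a3
    refine a3.trans (le_of_eq ?_)
    rw [hh]
    field_simp
  have hl : Tendsto (fun N : ℕ => φ 0 + C * (1 + 1 / ((N : ℝ) + 1))) atTop
      (𝓝 (φ 0 + C * (1 + 0))) :=
    tendsto_const_nhds.add (tendsto_const_nhds.mul (tendsto_const_nhds.add
      tendsto_one_div_add_atTop_nhds_zero_nat))
  simpa using ge_of_tendsto' hl key

lemma nu_smul {k : ℕ} (hk : 1 ≤ k) (t : ℝ) (Y : Matrix n n ℂ) :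
    nu k ((t : ℂ) • Y) ^ 2 = t ^ 2 * nu k Y ^ 2 := by
  have h : TT k ((t : ℂ) • Y) = (t ^ 2) ^ k * TT k Y := by
    rw [TT, TT, conjTranspose_smul, smul_mul_smul_comm, smul_pow, trace_smul, smul_eq_mul]
    have : (star (t : ℂ) * (t : ℂ)) ^ k = (((t ^ 2) ^ k : ℝ) : ℂ) := by
      simp [pow_two]
    rw [this, Complex.re_ofReal_mul]
  rw [← nu_pow hk, ← nu_pow hk, pow_mul, pow_mul, ← mul_pow] at h
  exact (pow_left_inj₀ (by positivity) (by positivity) (by omega)).mp h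

lemma nu_contract [Nonempty n] {k : ℕ} (hk : 1 ≤ k) (X Y : Matrix n n ℂ)
    (h : trace ((Xᴴ * X) ^ (k - 1) * Xᴴ * Y) = 0) : nu k X ≤ nu k (X + Y) := by
  have h1 := even_holder hk ((List.replicate (k - 1) [Xᴴ, X]).flatten ++ [Xᴴ, X + Y])
    (by simp; omega)
  have e : ((List.replicate (k - 1) [Xᴴ, X]).flatten ++ [Xᴴ, X + Y]).prod =
      (Xᴴ * X) ^ k + (Xᴴ * X) ^ (k - 1) * Xᴴ * Y := by
    simp only [List.prod_append, List.prod_flatten, List.map_replicate, List.prod_replicate,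
      List.prod_cons, List.prod_nil, mul_one]
    obtain ⟨k, rfl⟩ := Nat.exists_eq_add_of_le' hk
    simp only [Nat.add_sub_cancel, pow_succ, mul_add, mul_assoc]
  rw [e, trace_add, h, add_zero, trace_pow_TT, Complex.norm_real,
    Real.norm_of_nonneg (TT_nonneg _ _), ← nu_pow hk] at h1
  simp only [List.map_append, List.map_flatten, List.prod_append, List.prod_flatten,
    List.map_replicate, List.prod_replicate, List.map_cons, List.map_nil,
      List.prod_cons, List.prod_nil, mul_one, nu_conj] at h1
  rcases (nu_nonneg k X).eq_or_lt with h0 | h0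
  · rw [← h0]; exact nu_nonneg _ _
  · obtain ⟨k, rfl⟩ := Nat.exists_eq_add_of_le' hk
    simp only [Nat.add_sub_cancel] at h1
    set x := nu (k + 1) X
    rw [show x ^ (2 * (k + 1)) = (x * x) ^ k * (x * x) by ring] at h1
    have h2 := le_of_mul_le_mul_left h1 (by positivity)
    exact le_of_mul_le_mul_left h2 h0

lemma smoothness [Nonempty n] {k : ℕ} (hk : 1 ≤ k) (X Y : Matrix n n ℂ)
    (h : trace ((Xᴴ * X) ^ (k - 1) * Xᴴ * Y) = 0) :
    nu k (X + Y) ^ 2 ≤ nu k X ^ 2 + (2 * k - 1) * nu k Y ^ 2 := by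
  have := telescoping (fun t => nu k (X + (t : ℂ) • Y) ^ 2) ((2 * k - 1) * nu k Y ^ 2) (by
    intro s t
    have h1 := bcl hk (X + (s : ℂ) • Y) ((t : ℂ) • Y)
    rw [nu_smul hk] at h1
    have e1 : X + ((s + t : ℝ) : ℂ) • Y = X + (s : ℂ) • Y + (t : ℂ) • Y := by
      push_cast; rw [add_smul, add_assoc]
    have e2 : X + ((s - t : ℝ) : ℂ) • Y = X + (s : ℂ) • Y - (t : ℂ) • Y := by
      push_cast; rw [sub_smul]; abel
    simp only [e1, e2]
    linarith) (by
    intro t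
    have := nu_contract hk X ((t : ℂ) • Y) (by rw [mul_smul_comm, trace_smul, h, smul_zero])
    simp only [Complex.ofReal_zero, zero_smul, add_zero]
    exact pow_le_pow_left₀ (nu_nonneg _ _) this 2)
  simpa using this

end

section
open Matrix

variable {m : ℕ} {Q : Fin m → Type*} [∀ x, Fintype (Q x)] [∀ x, DecidableEq (Q x)]

/-- matrix unit at a single site -/
def hop (x : Fin m) (u w : Q x) : Matrix (∀ y, Q y) (∀ y, Q y) ℂ :=
  fun f g => if g x = w ∧ f = Function.update g x u then 1 else 0

lemma mul_hop (x : Fin m) (u w : Q x) (A : Matrix (∀ y, Q y) (∀ y, Q y) ℂ) (f g : ∀ y, Q y) :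
    (A * hop x u w) f g = if g x = w then A f (Function.update g x u) else 0 := by
  rw [mul_apply]
  by_cases h : g x = w
  · simp [hop, h]
  · simp [hop, h]

lemma upd_iff (x : Fin m) (u w : Q x) (f h : ∀ y, Q y) :
    (h x = w ∧ f = Function.update h x u) ↔ (f x = u ∧ h = Function.update f x w) := by
  constructor
  · rintro ⟨rfl, rfl⟩
    simp
  · rintro ⟨rfl, rfl⟩
    simp

lemma hop_apply' (x : Fin m) (u w : Q x) (f h : ∀ y, Q y) :
    hop x u w f h = if f x = u ∧ h = Function.update f x w then 1 else 0 :=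
  if_congr (upd_iff x u w f h) rfl rfl

lemma hop_mul (x : Fin m) (u w : Q x) (A : Matrix (∀ y, Q y) (∀ y, Q y) ℂ) (f g : ∀ y, Q y) :
    (hop x u w * A) f g = if f x = u then A (Function.update f x w) g else 0 := by
  rw [mul_apply]
  simp only [hop_apply']
  by_cases h : f x = u
  · simp [h]
  · simp [h]

lemma hop_hop (x : Fin m) (u v w : Q x) : hop x u v * hop x v w = hop x u w := by
  ext f g
  rw [mul_hop]
  by_cases h : g x = w
  · simp [hop, h]
  · simp [hop, h]

lemma sum_hop (x : Fin m) : ∑ u, hop x u u = (1 : Matrix (∀ y, Q y) (∀ y, Q y) ℂ) := by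
  ext f g
  rw [Matrix.sum_apply, Finset.sum_eq_single (g x)]
  · simp [hop, one_apply]
  · intro b _ hb
    simp [hop, hb.symm]
  · simp

lemma hop_conj (x : Fin m) (u v : Q x) : (hop x u v)ᴴ = hop x v u := by
  ext f g
  rw [conjTranspose_apply, hop_apply' x v u]
  unfold hop
  split_ifs <;> simp

/-- acts as the identity at site `x` -/
def IdAt (x : Fin m) (A : Matrix (∀ y, Q y) (∀ y, Q y) ℂ) : Prop :=
  ∀ u w, Commute A (hop x u w)

lemma IdAt.conj {x : Fin m} {A : Matrix (∀ y, Q y) (∀ y, Q y) ℂ} (h : IdAt x A) : IdAt x Aᴴ := by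
  intro u w
  have := congrArg conjTranspose (h w u).eq
  rw [conjTranspose_mul, conjTranspose_mul, hop_conj] at this
  exact this.symm

lemma trace_idAt_traceless {x : Fin m} {B Y : Matrix (∀ y, Q y) (∀ y, Q y) ℂ} (hB : IdAt x B)
    (hY : TracelessAt Q x Y) : trace (B * Y) = 0 := by
  rcases isEmpty_or_nonempty (Q x) with h | ⟨⟨u⟩⟩
  · have : IsEmpty (∀ y, Q y) := ⟨fun f => h.elim (f x)⟩
    simp [trace]
  have h0 : ∑ v, hop x u v * Y * hop x v u = 0 := by
    ext f g
    rw [Matrix.sum_apply]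
    simp only [mul_hop, hop_mul]
    have := hY f g
    by_cases h1 : g x = u <;> by_cases h2 : f x = u <;> simp [h1, h2, this]
  have h1 : ∀ v, trace (B * (hop x v v * Y)) = trace (B * (hop x u v * Y * hop x v u)) := by
    intro v
    calc trace (B * (hop x v v * Y)) = trace (B * hop x v u * (hop x u v * Y)) := by
          rw [← hop_hop x v u v]; simp only [mul_assoc]
      _ = trace (hop x v u * (B * (hop x u v * Y))) := by rw [(hB v u).eq, mul_assoc]
      _ = _ := by rw [trace_mul_comm]; simp only [mul_assoc]
  calc trace (B * Y) = trace (B * ((∑ v, hop x v v) * Y)) := by rw [sum_hop, one_mul]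
    _ = ∑ v, trace (B * (hop x v v * Y)) := by rw [Finset.sum_mul, Finset.mul_sum, trace_sum]
    _ = trace (B * ∑ v, hop x u v * Y * hop x v u) := by
      rw [Finset.mul_sum, trace_sum]
      exact Finset.sum_congr rfl fun v _ => h1 v
    _ = 0 := by rw [h0, mul_zero, Matrix.trace_zero]

lemma supported_idAt {S : Finset (Fin m)} {A : Matrix (∀ y, Q y) (∀ y, Q y) ℂ}
    (h : SupportedOn Q S A) {x : Fin m} (hx : x ∉ S) : IdAt x A := by
  obtain ⟨B, rfl⟩ := h
  intro u w
  unfold Commute SemiconjBy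
  ext f g
  rw [mul_hop, hop_mul]
  simp only [reindex_apply, submatrix_apply, Equiv.symm_symm, kroneckerMap_apply, one_apply,
    Equiv.piEquivPiSubtypeProd_apply]
  have e1 : ∀ (f : ∀ y, Q y) (v : Q x),
      (fun y : {y : Fin m // y ∈ S} => Function.update f x v y) =
        fun y : {y : Fin m // y ∈ S} => f y := by
    intro f v
    ext y
    rw [Function.update_of_ne]
    rintro h
    exact hx (h ▸ y.2)
  have e2 : (g x = w ∧ (fun y : {y : Fin m // ¬ y ∈ S} => f y) =
        fun y : {y : Fin m // ¬ y ∈ S} => Function.update g x u y) ↔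
      (f x = u ∧ (fun y : {y : Fin m // ¬ y ∈ S} => Function.update f x w y) =
        fun y : {y : Fin m // ¬ y ∈ S} => g y) := by
    constructor
    · rintro ⟨rfl, h⟩
      have h1 := congrFun h ⟨x, hx⟩
      simp only [Function.update_self] at h1
      refine ⟨h1, ?_⟩
      ext ⟨y, hy⟩
      by_cases hyx : y = x
      · subst hyx; simp
      · have := congrFun h ⟨y, hy⟩
        simpa [Function.update_of_ne hyx] using this
    · rintro ⟨rfl, h⟩
      have h1 := congrFun h ⟨x, hx⟩
      simp only [Function.update_self] at h1
      refine ⟨h1.symm, ?_⟩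
      ext ⟨y, hy⟩
      by_cases hyx : y = x
      · subst hyx; simp
      · have := congrFun h ⟨y, hy⟩
        simpa [Function.update_of_ne hyx] using this
  simp only [e1, mul_ite, mul_one, mul_zero, ← ite_and, e2]

lemma induct [Nonempty (∀ y, Q y)] {r : ℕ} (hr : 1 ≤ r) (T : Finset (Fin m)) :
    ∀ H : Finset (Fin m) → Matrix (∀ y, Q y) (∀ y, Q y) ℂ,
    (∀ S ⊆ T, ∀ x ∈ S, TracelessAt Q x (H S)) → (∀ S ⊆ T, ∀ x ∈ T, x ∉ S → IdAt x (H S)) →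
    nu r (∑ S ∈ T.powerset, H S) ^ 2 ≤
      ∑ S ∈ T.powerset, (2 * r - 1 : ℝ) ^ S.card * nu r (H S) ^ 2 := by
  have hr1 : (1 : ℝ) ≤ r := by exact_mod_cast hr
  induction T using Finset.induction_on with
  | empty => intro H _ _; simp
  | insert x T hx ih =>
    intro H h1 h2
    rw [Finset.sum_powerset_insert hx, Finset.sum_powerset_insert hx]
    have hsub : ∀ S ⊆ T, S ⊆ insert x T := fun S hS => hS.trans (Finset.subset_insert _ _)
    have hins : ∀ S ⊆ T, insert x S ⊆ insert x T := fun S hS => Finset.insert_subset_insert _ hS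
    set X := ∑ S ∈ T.powerset, H S with hX
    set Y := ∑ S ∈ T.powerset, H (insert x S) with hY
    have hXid : IdAt x X := by
      intro u w
      refine Commute.sum_left _ _ _ fun S hS => ?_
      have hS := Finset.mem_powerset.mp hS
      exact h2 S (hsub S hS) x (Finset.mem_insert_self _ _) (fun h => hx (hS h)) u w
    have hYtr : TracelessAt Q x Y := by
      intro f g
      simp only [hY, Matrix.sum_apply]
      rw [Finset.sum_comm]
      refine Finset.sum_eq_zero fun S hS => ?_
      have hS := Finset.mem_powerset.mp hS
      exact h1 _ (hins S hS) x (Finset.mem_insert_self _ _) f g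
    have hid : IdAt x ((Xᴴ * X) ^ (r - 1) * Xᴴ) := by
      intro u w
      exact (((hXid.conj u w).mul_left (hXid u w)).pow_left _).mul_left (hXid.conj u w)
    have h3 := smoothness hr X Y (trace_idAt_traceless hid hYtr)
    have h4 := ih H (fun S hS => h1 S (hsub S hS))
      (fun S hS y hy => h2 S (hsub S hS) y (Finset.mem_insert_of_mem hy))
    have h5 := ih (fun S => H (insert x S))
      (fun S hS y hy => h1 _ (hins S hS) y (Finset.mem_insert_of_mem hy))
      (fun S hS y hy hyS => h2 _ (hins S hS) y (Finset.mem_insert_of_mem hy) (by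
        rw [Finset.mem_insert]
        rintro (rfl | h)
        · exact hx hy
        · exact hyS h))
    have h6 : ∑ S ∈ T.powerset, (2 * r - 1 : ℝ) ^ (insert x S).card * nu r (H (insert x S)) ^ 2 =
        (2 * r - 1) * ∑ S ∈ T.powerset, (2 * r - 1 : ℝ) ^ S.card * nu r (H (insert x S)) ^ 2 := by
      rw [Finset.mul_sum]
      refine Finset.sum_congr rfl fun S hS => ?_
      have hS := Finset.mem_powerset.mp hS
      rw [Finset.card_insert_of_notMem (fun h => hx (hS h)), pow_succ]
      ring
    rw [h6]
    have h7 := mul_le_mul_of_nonneg_left h5 (by linarith : (0 : ℝ) ≤ 2 * r - 1)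
    linarith

lemma TT_le {n : Type*} [Fintype n] [DecidableEq n] (r : ℕ) (A : Matrix n n ℂ) :
    TT r A ≤ Fintype.card n * opNorm A ^ (2 * r) := by
  rw [TT_eq]
  calc ∑ i, sv A i ^ (2 * r) ≤ ∑ _i : n, opNorm A ^ (2 * r) :=
        Finset.sum_le_sum fun i _ => pow_le_pow_left₀ (sv_nonneg _ _) (sv_le_opNorm A i) _
    _ = _ := by simp

lemma nu_le {n : Type*} [Fintype n] [DecidableEq n] {r : ℕ} (hr : 1 ≤ r) (A : Matrix n n ℂ) :
    nu r A ≤ (Fintype.card n : ℝ) ^ ((2 * r : ℝ))⁻¹ * opNorm A := by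
  have h0 : 0 ≤ opNorm A := norm_nonneg _
  refine (pow_le_pow_iff_left₀ (nu_nonneg _ _) (by positivity) (by omega : 2 * r ≠ 0)).mp ?_
  rw [nu_pow hr, mul_pow, ← Real.rpow_natCast (_ ^ _), ← Real.rpow_mul (by positivity)]
  push_cast
  rw [inv_mul_cancel₀ (by positivity), Real.rpow_one]
  exact TT_le r A

lemma klocal_even [Nonempty (∀ y, Q y)] {r : ℕ} (hr : 1 ≤ r) (k : ℕ)
    (Hterm : Finset (Fin m) → Matrix (∀ x, Q x) (∀ x, Q x) ℂ)
    (hsupp : ∀ S ∈ Finset.univ.powersetCard k, SupportedOn Q S (Hterm S))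
    (htr : ∀ S ∈ Finset.univ.powersetCard k, ∀ x ∈ S, TracelessAt Q x (Hterm S)) :
    TT r (∑ S ∈ Finset.univ.powersetCard k, Hterm S) ≤ Fintype.card (∀ x, Q x) *
      ((2 * r - 1 : ℝ) ^ k * ∑ S ∈ Finset.univ.powersetCard k, opNorm (Hterm S) ^ 2) ^ r := by
  have hr1 : (1 : ℝ) ≤ r := by exact_mod_cast hr
  have hr2 : (0 : ℝ) ≤ 2 * r - 1 := by linarith
  have hmem : ∀ S : Finset (Fin m), S ∈ Finset.univ.powersetCard k ↔ S.card = k := by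
    intro S; simp [Finset.mem_powersetCard]
  have hfil : (Finset.univ : Finset (Fin m)).powersetCard k =
      (Finset.univ : Finset (Fin m)).powerset.filter fun S => S.card = k := by
    ext S; simp [Finset.mem_powersetCard]
  have h := induct hr Finset.univ (fun S => if S.card = k then Hterm S else 0)
    (by
      intro S _ x hx
      by_cases hS : S.card = k
      · simp only [hS, if_true]
        exact htr S ((hmem S).mpr hS) x hx
      · simp only [hS, if_false]
        intro f g
        simp)
    (by
      intro S _ x _ hx
      by_cases hS : S.card = k
      · simp only [hS, if_true]
        exact supported_idAt (hsupp S ((hmem S).mpr hS)) hx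
      · simp only [hS, if_false]
        intro u w
        exact Commute.zero_left _)
  rw [← Finset.sum_filter, ← hfil] at h
  set H := ∑ S ∈ Finset.univ.powersetCard k, Hterm S
  set D : ℝ := (Fintype.card (∀ x, Q x) : ℝ) ^ ((2 * r : ℝ))⁻¹ with hD
  have h2 : ∑ S ∈ (Finset.univ : Finset (Fin m)).powerset, (2 * r - 1 : ℝ) ^ S.card *
      nu r (if S.card = k then Hterm S else 0) ^ 2 ≤
      D ^ 2 * ((2 * r - 1 : ℝ) ^ k * ∑ S ∈ Finset.univ.powersetCard k, opNorm (Hterm S) ^ 2) := by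
    rw [hfil, Finset.sum_filter, Finset.mul_sum, Finset.mul_sum]
    refine Finset.sum_le_sum fun S _ => ?_
    by_cases hS : S.card = k
    · simp only [hS, if_true]
      have := pow_le_pow_left₀ (nu_nonneg r (Hterm S)) (nu_le hr (Hterm S)) 2
      rw [mul_pow] at this
      nlinarith [mul_le_mul_of_nonneg_left this (pow_nonneg hr2 k)]
    · simp only [hS, if_false]
      have : nu r (0 : Matrix (∀ x, Q x) (∀ x, Q x) ℂ) = 0 := by
        have h1 := nu_le hr (0 : Matrix (∀ x, Q x) (∀ x, Q x) ℂ)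
        simp only [opNorm, map_zero, norm_zero, mul_zero] at h1
        exact le_antisymm h1 (nu_nonneg _ _)
      simp [this]
  have h3 := pow_le_pow_left₀ (sq_nonneg _) (h.trans h2) r
  rw [← pow_mul, nu_pow hr, mul_pow (D ^ 2), ← pow_mul] at h3
  have h4 : D ^ (2 * r) = Fintype.card (∀ x, Q x) := by
    rw [hD, ← Real.rpow_natCast (_ ^ _), ← Real.rpow_mul (by positivity)]
    push_cast
    rw [inv_mul_cancel₀ (by positivity), Real.rpow_one]
  rwa [h4] at h3

end

section
open Matrix Filter Topology

lemma real_exponent_aux (a b N t r : ℝ) (hN : 1 ≤ N) (ht0 : 0 ≤ t) (ht1 : t ≤ 1)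
    (hr : r = 2 * N + 2 * t) (ha : a = 2 * N - 1) (hb : b = 2 * N + 1) :
    a ^ (N * (1 - t)) * b ^ ((N + 1) * t) ≤ r ^ (r / 2) := by
  have hr0 : 0 < r := by linarith
  have ha0 : 0 ≤ a := by linarith
  have hb0 : 0 ≤ b := by linarith
  have h := Real.geom_mean_le_arith_mean2_weighted (w₁ := 2 * N * (1 - t) / r)
    (w₂ := (2 * N + 2) * t / r) (p₁ := a) (p₂ := b)
    (div_nonneg (mul_nonneg (by linarith) (by linarith)) hr0.le)
    (div_nonneg (mul_nonneg (by linarith) (by linarith)) hr0.le) ha0 hb0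
    (by rw [← add_div, div_eq_one_iff_eq hr0.ne', hr]; ring)
  have h2 : 2 * N * (1 - t) / r * a + (2 * N + 2) * t / r * b ≤ r := by
    rw [div_mul_eq_mul_div, div_mul_eq_mul_div, ← add_div, div_le_iff₀ hr0, ha, hb, hr]
    nlinarith [mul_nonneg ht0 ht0]
  have h3 := Real.rpow_le_rpow (mul_nonneg (Real.rpow_nonneg ha0 _) (Real.rpow_nonneg hb0 _))
    (h.trans h2) (by linarith : (0 : ℝ) ≤ r / 2)
  rw [Real.mul_rpow (Real.rpow_nonneg ha0 _) (Real.rpow_nonneg hb0 _), ← Real.rpow_mul ha0,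
    ← Real.rpow_mul hb0] at h3
  have e1 : 2 * N * (1 - t) / r * (r / 2) = N * (1 - t) := by field_simp
  have e2 : (2 * N + 2) * t / r * (r / 2) = (N + 1) * t := by field_simp
  rwa [e1, e2] at h3

lemma real_exponent {n : Type*} [Fintype n] (s : n → ℝ) (hs : ∀ i, 0 ≤ s i) (k : ℕ) {B : ℝ}
    (hB : 0 < B)
    (h : ∀ N : ℕ, 1 ≤ N → ∑ i, s i ^ (2 * N) ≤ Fintype.card n * ((2 * N - 1 : ℝ) ^ k * B ^ 2) ^ N)
    {r : ℝ} (hr : 2 ≤ r) :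
    ∑ i, s i ^ r ≤ Fintype.card n * (r ^ ((k : ℝ) / 2) * B) ^ r := by
  set N := ⌊r / 2⌋₊ with hNdef
  have hr0 : 0 < r := by linarith
  have hN1 : 1 ≤ N := Nat.le_floor (by norm_num; linarith)
  have hN1' : (1 : ℝ) ≤ N := by exact_mod_cast hN1
  have hNle : (N : ℝ) ≤ r / 2 := Nat.floor_le (by linarith)
  have hNlt : r / 2 < N + 1 := Nat.lt_floor_add_one _
  set t := r / 2 - N with ht
  have ht0 : 0 ≤ t := by linarith
  have ht1 : t ≤ 1 := by linarith
  have hrt : r = 2 * N + 2 * t := by linarith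
  have h1 := h N hN1
  have h2 := h (N + 1) (by omega)
  have ha : (0 : ℝ) < 2 * N - 1 := by linarith
  have hb : (0 : ℝ) < 2 * N + 1 := by linarith
  have hb' : (2 * ((N + 1 : ℕ) : ℝ) - 1) = 2 * N + 1 := by push_cast; ring
  rw [hb'] at h2
  set M1 := ((2 * N - 1 : ℝ) ^ k * B ^ 2) ^ N with hM1
  set M2 := ((2 * N + 1 : ℝ) ^ k * B ^ 2) ^ (N + 1) with hM2
  have hM1p : 0 < M1 := by positivity
  have hM2p : 0 < M2 := by positivity
  have key : ∀ i, s i ^ r ≤ M1 ^ (1 - t) * M2 ^ t *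
      ((1 - t) * (s i ^ (2 * N) / M1) + t * (s i ^ (2 * (N + 1)) / M2)) := by
    intro i
    have hsi := hs i
    have hg := Real.geom_mean_le_arith_mean2_weighted (w₁ := 1 - t) (w₂ := t)
      (p₁ := s i ^ (2 * N) / M1) (p₂ := s i ^ (2 * (N + 1)) / M2) (by linarith) ht0
      (by positivity) (by positivity) (by ring)
    have hg2 := mul_le_mul_of_nonneg_left hg (by positivity : 0 ≤ M1 ^ (1 - t) * M2 ^ t)
    refine le_trans (le_of_eq ?_) hg2
    rw [Real.div_rpow (by positivity) hM1p.le, Real.div_rpow (by positivity) hM2p.le]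
    have e : s i ^ r = (s i ^ (2 * N)) ^ (1 - t) * (s i ^ (2 * (N + 1))) ^ t := by
      rw [← Real.rpow_natCast, ← Real.rpow_natCast, ← Real.rpow_mul hsi, ← Real.rpow_mul hsi,
        ← Real.rpow_add_of_nonneg hsi]
      · congr 1
        push_cast
        rw [hrt]; ring
      · exact mul_nonneg (by positivity) (by linarith)
      · exact mul_nonneg (by positivity) (by linarith)
    rw [e]
    have := (Real.rpow_pos_of_pos hM1p (1 - t)).ne'
    have := (Real.rpow_pos_of_pos hM2p t).ne'
    field_simp
  have hsum : ∑ i, s i ^ r ≤ M1 ^ (1 - t) * M2 ^ t * Fintype.card n := by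
    refine (Finset.sum_le_sum fun i _ => key i).trans ?_
    rw [← Finset.mul_sum, Finset.sum_add_distrib, ← Finset.mul_sum, ← Finset.mul_sum,
      ← Finset.sum_div, ← Finset.sum_div]
    refine mul_le_mul_of_nonneg_left ?_ (by positivity)
    have g1 : (∑ i, s i ^ (2 * N)) / M1 ≤ Fintype.card n := by rwa [div_le_iff₀ hM1p]
    have g2 : (∑ i, s i ^ (2 * (N + 1))) / M2 ≤ Fintype.card n := by rwa [div_le_iff₀ hM2p]
    have g3 := mul_le_mul_of_nonneg_left g1 (by linarith : 0 ≤ 1 - t)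
    have g4 := mul_le_mul_of_nonneg_left g2 ht0
    linarith
  refine hsum.trans ?_
  rw [mul_comm]
  refine mul_le_mul_of_nonneg_left ?_ (by positivity)
  have haux := real_exponent_aux (2 * N - 1) (2 * N + 1) N t r hN1' ht0 ht1 hrt rfl rfl
  have hpow : ∀ (x : ℝ) (M : ℕ) (u : ℝ), 0 < x →
      ((x ^ k * B ^ 2) ^ M) ^ u = (x ^ (M * u)) ^ k * B ^ (2 * (M * u)) := by
    intro x M u hx
    rw [← Real.rpow_natCast (_ * _), ← Real.rpow_mul (by positivity),
      Real.mul_rpow (by positivity) (by positivity), ← Real.rpow_natCast x,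
      ← Real.rpow_natCast B, ← Real.rpow_mul hx.le, ← Real.rpow_mul hB.le,
      ← Real.rpow_natCast (_ ^ _), ← Real.rpow_mul hx.le]
    congr 2
    ring
  rw [hM1, hM2, hpow _ _ _ ha, hpow _ _ _ hb]
  have e3 : (r ^ ((k : ℝ) / 2) * B) ^ r = (r ^ (r / 2)) ^ k * B ^ r := by
    rw [Real.mul_rpow (by positivity) hB.le, ← Real.rpow_mul hr0.le,
      ← Real.rpow_natCast (_ ^ _), ← Real.rpow_mul hr0.le]
    congr 2
    ring
  have e4 : B ^ r = B ^ (2 * (N * (1 - t))) * B ^ (2 * (((N + 1 : ℕ) : ℝ) * t)) := by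
    rw [← Real.rpow_add hB]
    congr 1
    push_cast
    rw [hrt]; ring
  rw [e3, e4]
  have := pow_le_pow_left₀ (by positivity) haux k
  rw [mul_pow] at this
  push_cast
  have hBB : 0 ≤ B ^ (2 * (N * (1 - t))) * B ^ (2 * (((N : ℝ) + 1) * t)) := by positivity
  have := mul_le_mul_of_nonneg_right this hBB
  linarith

variable {n : Type*} [Fintype n] [DecidableEq n]

lemma sv_one (i : n) : sv (1 : Matrix n n ℂ) i = 1 := by
  rw [← norm_A_eb]
  simp [eb]

lemma schatten_one {p : ℝ} : schattenNorm p (1 : Matrix n n ℂ) = (Fintype.card n : ℝ) ^ (1 / p) := by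
  rw [schatten_eq]
  simp [sv_one]

lemma holder_three [Nonempty n] (H O : Matrix n n ℂ) {p q r : ℝ} (hp : 1 < p) (hq : 0 < q)
    (hr : 0 < r) (h : 1 / p = 1 / r + 1 / q) :
    (∑ i, sv (H * O) i ^ p) ^ (1 / p) ≤
      (∑ i, sv H i ^ r) ^ (1 / r) * (∑ i, sv O i ^ q) ^ (1 / q) := by
  have hp0 : 0 < p := by linarith
  obtain ⟨U, hU, V, hV, e⟩ := exists_svd (H * O)
  obtain ⟨U1, hU1, V1, hV1, e1⟩ := exists_svd H
  obtain ⟨U2, hU2, V2, hV2, e2⟩ := exists_svd O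
  set s := sv (H * O) with hs
  have hs0 : ∀ i, 0 ≤ s i := sv_nonneg _
  set S := ∑ i, s i ^ p with hS
  have hS0 : 0 ≤ S := Finset.sum_nonneg fun i _ => Real.rpow_nonneg (hs0 i) _
  have hVh : Vᴴ ∈ unitaryGroup n ℂ := Unitary.star_mem hV
  have hUh : Uᴴ ∈ unitaryGroup n ℂ := Unitary.star_mem hU
  have hR1 : 0 ≤ ∑ i, sv H i ^ r := Finset.sum_nonneg fun i _ => Real.rpow_nonneg (sv_nonneg _ i) _
  have hR2 : 0 ≤ ∑ i, sv O i ^ q := Finset.sum_nonneg fun i _ => Real.rpow_nonneg (sv_nonneg _ i) _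
  rcases hS0.eq_or_lt with h0 | hSpos
  · rw [← h0, Real.zero_rpow (by positivity)]
    positivity
  have hold := holder_usv (ι := Fin 3) ![Vᴴ, U1, U2] ![Uᴴ, V1, V2]
    (by intro j; fin_cases j <;> simp <;> assumption)
    (by intro j; fin_cases j <;> simp <;> assumption)
    ![fun i => s i ^ (p - 1), sv H, sv O]
    (by
      intro j i
      fin_cases j
      · exact Real.rpow_nonneg (hs0 i) _
      · exact sv_nonneg _ _
      · exact sv_nonneg _ _)
    ![1 - 1 / p, 1 / r, 1 / q] [0, 1, 2]
    (by
      have : 1 / p < 1 := by rw [div_lt_one hp0]; exact hp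
      intro j _
      fin_cases j
      · simpa using this
      · simpa using hr
      · simpa using hq)
    (by simp only [List.map, List.sum_cons, List.sum_nil, cons_val]; linarith)
  simp only [List.map, List.prod_cons, List.prod_nil, cons_val, mul_one] at hold
  have hHO : usv U1 (sv H) V1 * usv U2 (sv O) V2 = usv U s V := by
    unfold usv
    rw [← e1, ← e2]; exact e
  rw [hHO, usv_mul U V Vᴴ hU] at hold
  have htr : trace (usv Vᴴ (fun i => s i ^ (p - 1) * s i) V) = ((S : ℝ) : ℂ) := by
    unfold usv
    rw [mul_assoc, trace_mul_comm, mul_assoc]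
    have hVV : V * Vᴴ = 1 := (mem_unitaryGroup_iff).mp hV
    rw [hVV, mul_one, trace_diagonal, hS]
    rw [Complex.ofReal_sum]
    refine Finset.sum_congr rfl fun i _ => ?_
    congr 1
    change s i ^ (p - 1) * s i = s i ^ p
    nth_rewrite 2 [← Real.rpow_one (s i)]
    rw [← Real.rpow_add_of_nonneg (hs0 i) (by linarith) (by norm_num)]
    congr 1; ring
  rw [htr, Complex.norm_real, Real.norm_of_nonneg hS0] at hold
  have e5 : ∑ i, (s i ^ (p - 1)) ^ (1 - 1 / p)⁻¹ = S := by
    refine Finset.sum_congr rfl fun i _ => ?_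
    rw [← Real.rpow_mul (hs0 i)]
    congr 1
    have : p - 1 ≠ 0 := by linarith
    field_simp
  rw [e5] at hold
  simp only [one_div, inv_inv] at hold
  have e6 : S = S ^ (1 - p⁻¹) * S ^ (p⁻¹) := by
    rw [← Real.rpow_add hSpos]; simp
  nth_rewrite 1 [e6] at hold
  simp only [one_div]
  exact le_of_mul_le_mul_left hold (Real.rpow_pos_of_pos hSpos _)

end

section
open Matrix Filter Topology
variable {n : Type*} [Fintype n] [DecidableEq n]

lemma sum_sv_pos {O : Matrix n n ℂ} (hO : O ≠ 0) (p : ℝ) : 0 < ∑ i, sv O i ^ p := by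
  have h0 : ∀ i, 0 ≤ sv O i := sv_nonneg O
  have : ∃ i, sv O i ≠ 0 := by
    by_contra hcon
    push Not at hcon
    obtain ⟨U, _, V, _, e⟩ := exists_svd O
    apply hO
    rw [e]
    simp [hcon]
  obtain ⟨i, hi⟩ := this
  exact Finset.sum_pos' (fun j _ => Real.rpow_nonneg (h0 j) _)
    ⟨i, Finset.mem_univ _, Real.rpow_pos_of_pos ((h0 i).lt_of_ne hi.symm) _⟩

lemma main_eps [Nonempty n] (H O : Matrix n n ℂ) (k : ℕ) {B : ℝ} (hB : 0 ≤ B)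
    (h : ∀ N : ℕ, 1 ≤ N → TT N H ≤ Fintype.card n * ((2 * N - 1 : ℝ) ^ k * B ^ 2) ^ N)
    (hO : O ≠ 0) (hO1 : opNorm O ≤ 1) {p : ℝ} (hp : 2 ≤ p) {ε : ℝ} (hε : 0 < ε) :
    nschattenNorm p (H * O) ≤ Real.exp 1 * p ^ ((k : ℝ) / 2) * (B + ε) * nschattenNorm p O *
      (|Real.log (nschattenNorm p O)| + 1 + ε) ^ ((k : ℝ) / 2) := by
  have hp0 : 0 < p := by linarith
  set d : ℝ := (Fintype.card n : ℝ) with hd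
  have hd0 : 0 < d := by rw [hd]; exact_mod_cast Fintype.card_pos
  set SO := ∑ i, sv O i ^ p with hSO
  have hSO0 : 0 < SO := sum_sv_pos hO p
  have hsv1 : ∀ i, sv O i ≤ 1 := fun i => (sv_le_opNorm O i).trans hO1
  have hSOd : SO ≤ d := by
    calc SO ≤ ∑ _i : n, (1 : ℝ) := Finset.sum_le_sum fun i _ =>
          Real.rpow_le_one (sv_nonneg _ _) (hsv1 i) hp0.le
      _ = d := by simp [hd]
  set x := nschattenNorm p O with hx
  have hxe : x = SO ^ (1 / p) / d ^ (1 / p) := by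
    rw [hx, nschattenNorm, schatten_eq, schatten_one]
  have hx0 : 0 < x := by rw [hxe]; positivity
  have hx1 : x ≤ 1 := by
    rw [hxe, div_le_one (by positivity)]
    exact Real.rpow_le_rpow hSO0.le hSOd (by positivity)
  have hlog : Real.log x ≤ 0 := Real.log_nonpos hx0.le hx1
  set L := |Real.log x| with hL
  have hLe : L = -Real.log x := abs_of_nonpos hlog
  have hL0 : 0 ≤ L := abs_nonneg _
  set c := L + 1 + ε with hc
  have hc1 : 1 < c := by linarith
  have hc0 : 0 < c := by linarith
  set r := p * c with hr
  have hr0 : 0 < r := by positivity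
  have hr2 : 2 ≤ r := by nlinarith
  have hdiff : 0 < 1 / p - 1 / r := by
    rw [sub_pos]
    exact one_div_lt_one_div_of_lt hp0 (by rw [hr]; nlinarith)
  set q := (1 / p - 1 / r)⁻¹ with hq
  have hq0 : 0 < q := inv_pos.mpr hdiff
  have hq1 : 1 / q = 1 / p - 1 / r := by rw [hq, one_div, inv_inv]
  have hpq : p ≤ q := by
    have : 1 / q ≤ 1 / p := by rw [hq1]; have : 0 < 1 / r := by positivity
                               linarith
    exact (one_div_le_one_div hq0 hp0).mp this
  have hold := holder_three H O (p := p) (q := q) (r := r) (by linarith) hq0 hr0 (by rw [hq1]; ring)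
  have hHr := real_exponent (sv H) (sv_nonneg H) k (B := B + ε) (by linarith) (by
    intro N hN
    rw [← TT_eq]
    refine (h N hN).trans ?_
    have : (1 : ℝ) ≤ N := by exact_mod_cast hN
    have h2 : (0 : ℝ) ≤ 2 * N - 1 := by linarith
    gcongr
    linarith) hr2
  have hOq : ∑ i, sv O i ^ q ≤ SO := Finset.sum_le_sum fun i _ =>
    Real.rpow_le_rpow_of_exponent_ge_of_imp (sv_nonneg _ _) (hsv1 i) hpq (fun _ h => absurd h hq0.ne')
  have hBε : 0 < B + ε := by linarith
  have hR1 : 0 ≤ ∑ i, sv H i ^ r := Finset.sum_nonneg fun i _ => Real.rpow_nonneg (sv_nonneg _ i) _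
  have hR2 : 0 ≤ ∑ i, sv O i ^ q := Finset.sum_nonneg fun i _ => Real.rpow_nonneg (sv_nonneg _ i) _
  have h1 : (∑ i, sv H i ^ r) ^ (1 / r) ≤ d ^ (1 / r) * (r ^ ((k : ℝ) / 2) * (B + ε)) := by
    refine (Real.rpow_le_rpow hR1 hHr (by positivity)).trans (le_of_eq ?_)
    rw [Real.mul_rpow hd0.le (by positivity), ← Real.rpow_mul (by positivity),
      mul_one_div_cancel hr0.ne', Real.rpow_one]
  have hSOx : SO = d * x ^ p := by
    rw [hxe, Real.div_rpow (by positivity) (by positivity), ← Real.rpow_mul hSO0.le,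
      ← Real.rpow_mul hd0.le, one_div_mul_cancel hp0.ne', Real.rpow_one, Real.rpow_one]
    field_simp
  have h2 : (∑ i, sv O i ^ q) ^ (1 / q) ≤ d ^ (1 / q) * (x * Real.exp 1) := by
    refine (Real.rpow_le_rpow hR2 hOq (by positivity)).trans ?_
    rw [hSOx, Real.mul_rpow hd0.le (by positivity), ← Real.rpow_mul hx0.le]
    refine mul_le_mul_of_nonneg_left ?_ (by positivity)
    have e1 : p * (1 / q) = 1 + -(1 / c) := by
      rw [hq1, hr]; field_simp; ring
    rw [e1, Real.rpow_add hx0, Real.rpow_one]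
    refine mul_le_mul_of_nonneg_left ?_ hx0.le
    rw [Real.rpow_def_of_pos hx0]
    apply Real.exp_le_exp.mpr
    have : Real.log x * -(1 / c) = L / c := by rw [hLe]; ring
    rw [this, div_le_one hc0]
    linarith
  have h3 := hold.trans (mul_le_mul h1 h2 (by positivity) (by positivity))
  rw [nschattenNorm, schatten_eq, schatten_one, div_le_iff₀ (by positivity)]
  refine h3.trans (le_of_eq ?_)
  have e2 : d ^ (1 / p) = d ^ (1 / r) * d ^ (1 / q) := by
    rw [← Real.rpow_add hd0, hq1]; congr 1; ring
  have e3 : r ^ ((k : ℝ) / 2) = p ^ ((k : ℝ) / 2) * c ^ ((k : ℝ) / 2) :=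
    Real.mul_rpow hp0.le hc0.le
  rw [← hd, e2, e3]
  ring

lemma main_lim [Nonempty n] (H O : Matrix n n ℂ) (k : ℕ) {B : ℝ} (hB : 0 ≤ B)
    (h : ∀ N : ℕ, 1 ≤ N → TT N H ≤ Fintype.card n * ((2 * N - 1 : ℝ) ^ k * B ^ 2) ^ N)
    (hO : O ≠ 0) (hO1 : opNorm O ≤ 1) {p : ℝ} (hp : 2 ≤ p) :
    nschattenNorm p (H * O) ≤ Real.exp 1 * p ^ ((k : ℝ) / 2) * B * nschattenNorm p O *
      (|Real.log (nschattenNorm p O)| + 1) ^ ((k : ℝ) / 2) := by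
  have hc : Continuous fun ε : ℝ => Real.exp 1 * p ^ ((k : ℝ) / 2) * (B + ε) *
      nschattenNorm p O * (|Real.log (nschattenNorm p O)| + 1 + ε) ^ ((k : ℝ) / 2) := by
    refine Continuous.mul (by fun_prop) ?_
    exact Continuous.rpow_const (by fun_prop) fun _ => Or.inr (by positivity)
  have ht := (hc.tendsto 0).mono_left (nhdsWithin_le_nhds (s := Set.Ioi 0))
  simp only [add_zero] at ht
  refine ge_of_tendsto ht ?_
  filter_upwards [self_mem_nhdsWithin] with ε hε
  exact main_eps H O k hB h hO hO1 hp hε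
end

/-- **Approximate submultiplicativity for normalized Schatten `p`-norms, `k`-local case.**
For a `k`-local Hamiltonian `H = ∑_{i₁<⋯<i_k} H_{i₁⋯i_k}` (sum over `k`-element subsets,
each term supported on its subset and traceless on each of its qudits), every nonzero `O`
with `‖O‖_∞ ≤ 1` and every `p ≥ 2`,
`‖HO‖_p̄ ≤ e·p^{k/2}·‖H‖_(2)·‖O‖_p̄·(|ln ‖O‖_p̄| + 1)^{k/2}`. -/
theorem klocal_nschatten_submultiplicativity
    {m : ℕ} (Q : Fin m → Type*) [∀ x, Fintype (Q x)] [∀ x, DecidableEq (Q x)]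
    (k : ℕ)
    (Hterm : Finset (Fin m) → Matrix (∀ x, Q x) (∀ x, Q x) ℂ)
    (hsupp : ∀ S ∈ Finset.univ.powersetCard k, SupportedOn Q S (Hterm S))
    (htr : ∀ S ∈ Finset.univ.powersetCard k, ∀ x ∈ S, TracelessAt Q x (Hterm S))
    (H : Matrix (∀ x, Q x) (∀ x, Q x) ℂ)
    (hH : H = ∑ S ∈ Finset.univ.powersetCard k, Hterm S)
    (O : Matrix (∀ x, Q x) (∀ x, Q x) ℂ) (hO : O ≠ 0) (hOnorm : opNorm O ≤ 1)
    (p : ℝ) (hp : 2 ≤ p) :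
    nschattenNorm p (H * O) ≤
      Real.exp 1 * p ^ ((k : ℝ) / 2) *
        Real.sqrt (∑ S ∈ Finset.univ.powersetCard k, opNorm (Hterm S) ^ 2) *
        nschattenNorm p O * (|Real.log (nschattenNorm p O)| + 1) ^ ((k : ℝ) / 2) := by
  have hne : Nonempty (∀ x, Q x) := by
    by_contra hcon
    rw [not_nonempty_iff] at hcon
    exact hO (Subsingleton.elim _ _)
  refine main_lim H O k (Real.sqrt_nonneg _) ?_ hO hOnorm hp
  intro N hN
  rw [Real.sq_sqrt (Finset.sum_nonneg fun S _ => sq_nonneg _), hH]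
  exact klocal_even hN k Hterm hsupp htr
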